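/- arXiv:2302.08462 — 2 statements merged into one kernel-verified Lean document; each statement's English description precedes it below -/
import Mathlib

section
/- Let d ≥ 1, let Ω ⊆ ℝ^d be a nonempty bounded open set, let β ∈ (0,1], and let u : closure(Ω) → ℝ be continuous and satisfy comparison with β-cones on Ω. Then for every ε > 0, every x ∈ Ω_{2ε} and every y ∈ B(x;2ε) one has u(y) ≤ u(x) + (u^{2ε}(x) − u(x)) · |y − x|^β / (2ε)^β. -/
open Metric Real Set Filter

noncomputable section

/-- The inner parallel set `Ω_ε = {x ∈ Ω : dist(x, ∂Ω) > ε}`. -/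
def innerSet {d : ℕ} (Ω : Set (EuclideanSpace ℝ (Fin d))) (ε : ℝ) :
    Set (EuclideanSpace ℝ (Fin d)) :=
  {x ∈ Ω | ε < Metric.infDist x (frontier Ω)}

/-- Upper envelope `u^ε(x) = sup_{y ∈ B(x;ε)} u(y)`. -/
def upperEnv {d : ℕ} (u : EuclideanSpace ℝ (Fin d) → ℝ) (ε : ℝ)
    (x : EuclideanSpace ℝ (Fin d)) : ℝ :=
  sSup (u '' Metric.closedBall x ε)

/-- Lower envelope `u_ε(x) = inf_{y ∈ B(x;ε)} u(y)`. -/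
def lowerEnv {d : ℕ} (u : EuclideanSpace ℝ (Fin d) → ℝ) (ε : ℝ)
    (x : EuclideanSpace ℝ (Fin d)) : ℝ :=
  sInf (u '' Metric.closedBall x ε)

/-- Finite-difference infinity-Laplacian `Δ_∞^ε u(x) = (u^ε(x) + u_ε(x) - 2u(x))/ε²`. -/
def nlInfLap {d : ℕ} (u : EuclideanSpace ℝ (Fin d) → ℝ) (ε : ℝ)
    (x : EuclideanSpace ℝ (Fin d)) : ℝ :=
  (upperEnv u ε x + lowerEnv u ε x - 2 * u x) / ε ^ 2

/-- Lower ε-slope `S_-^ε u(x) = (u(x) - u_ε(x))/ε`. -/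
def lowerSlope {d : ℕ} (u : EuclideanSpace ℝ (Fin d) → ℝ) (ε : ℝ)
    (x : EuclideanSpace ℝ (Fin d)) : ℝ :=
  (u x - lowerEnv u ε x) / ε

/-- Supremum norm of `u` over the set `S`. -/
def supNorm {d : ℕ} (S : Set (EuclideanSpace ℝ (Fin d)))
    (u : EuclideanSpace ℝ (Fin d) → ℝ) : ℝ :=
  sSup ((fun x => |u x|) '' S)

/-- `u` satisfies comparison with `β`-cones on `Ω`. -/
def ComparisonWithCones {d : ℕ} (Ω : Set (EuclideanSpace ℝ (Fin d))) (β : ℝ)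
    (u : EuclideanSpace ℝ (Fin d) → ℝ) : Prop :=
  ∀ D : Set (EuclideanSpace ℝ (Fin d)), IsOpen D → closure D ⊆ Ω →
    ∀ a : ℝ, 0 ≤ a → ∀ x₀ : EuclideanSpace ℝ (Fin d), x₀ ∉ D → ∀ x ∈ D,
      sInf ((fun ξ => u ξ - a * ‖ξ - x₀‖ ^ β) '' frontier D) ≤ u x - a * ‖x - x₀‖ ^ β ∧
      u x - a * ‖x - x₀‖ ^ β ≤ sSup ((fun ξ => u ξ - a * ‖ξ - x₀‖ ^ β) '' frontier D)

/-- If a point of `Ω` is at distance more than `r` from the boundary of `Ω`, then the closed ball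
of radius `r` around it lies in `Ω`. -/
theorem closedBall_subset_of_mem_innerSet {d : ℕ} {Ω : Set (EuclideanSpace ℝ (Fin d))} {r : ℝ}
    {x : EuclideanSpace ℝ (Fin d)} (hx : x ∈ innerSet Ω r) :
    closedBall x r ⊆ Ω := by
  intro z hz
  by_contra hzΩ
  obtain ⟨w, hw, hdist⟩ := exists_mem_frontier_infDist_compl_eq_dist hx.1
    fun h => hzΩ (h ▸ mem_univ z)
  have hle : infDist x (frontier Ω) ≤ r :=
    calc infDist x (frontier Ω) ≤ dist x w := infDist_le_dist_of_mem hw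
      _ = infDist x Ωᶜ := hdist.symm
      _ ≤ dist x z := infDist_le_dist_of_mem hzΩ
      _ ≤ r := mem_closedBall'.1 hz
  exact hle.not_gt hx.2

/-- Upper comparison with a `β`-cone in pointwise form: a bound for `u` minus the cone on the
boundary of `D` holds on all of `D`. -/
theorem ComparisonWithCones.le_of_forall_frontier_le {d : ℕ}
    {Ω : Set (EuclideanSpace ℝ (Fin d))} {β : ℝ} {u : EuclideanSpace ℝ (Fin d) → ℝ}
    (hcomp : ComparisonWithCones Ω β u) {D : Set (EuclideanSpace ℝ (Fin d))} (hDo : IsOpen D)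
    (hDΩ : closure D ⊆ Ω) {a : ℝ} (ha : 0 ≤ a) {x₀ : EuclideanSpace ℝ (Fin d)} (hx₀ : x₀ ∉ D)
    {c : ℝ} (hc : ∀ ξ ∈ frontier D, u ξ - a * ‖ξ - x₀‖ ^ β ≤ c)
    {y : EuclideanSpace ℝ (Fin d)} (hy : y ∈ D) : u y - a * ‖y - x₀‖ ^ β ≤ c := by
  have hne : (frontier D).Nonempty :=
    nonempty_frontier_iff.2 ⟨⟨y, hy⟩, fun h => hx₀ (h ▸ mem_univ x₀)⟩
  refine (hcomp D hDo hDΩ a ha x₀ hx₀ y hy).2.trans (csSup_le (hne.image _) ?_)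
  rintro _ ⟨ξ, hξ, rfl⟩
  exact hc ξ hξ

/-- comparison with Hölder cones gives the pointwise estimate
`u(y) ≤ u(x) + (u^{2ε}(x) − u(x)) · |y − x|^β / (2ε)^β` on balls. -/
theorem stmt0 {d : ℕ} (hd : 1 ≤ d) (Ω : Set (EuclideanSpace ℝ (Fin d)))
    (hΩne : Ω.Nonempty) (hΩb : Bornology.IsBounded Ω) (hΩo : IsOpen Ω)
    (β : ℝ) (hβ : β ∈ Set.Ioc (0 : ℝ) 1)
    (u : EuclideanSpace ℝ (Fin d) → ℝ) (hu : ContinuousOn u (closure Ω))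
    (hcomp : ComparisonWithCones Ω β u)
    (ε : ℝ) (hε : 0 < ε)
    (x : EuclideanSpace ℝ (Fin d)) (hx : x ∈ innerSet Ω (2 * ε))
    (y : EuclideanSpace ℝ (Fin d)) (hy : y ∈ Metric.closedBall x (2 * ε)) :
    u y ≤ u x + (upperEnv u (2 * ε) x - u x) * ‖y - x‖ ^ β / (2 * ε) ^ β := by
  obtain ⟨r, hr⟩ : ∃ r, r = 2 * ε := ⟨_, rfl⟩
  rw [← hr] at hx hy ⊢
  have hr0 : 0 < r := by linarith
  have hrβ : 0 < r ^ β := rpow_pos_of_pos hr0 β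
  have hball : closedBall x r ⊆ Ω := closedBall_subset_of_mem_innerSet hx
  have hbdd : BddAbove (u '' closedBall x r) :=
    ((isCompact_closedBall x r).image_of_continuousOn
      (hu.mono (hball.trans subset_closure))).bddAbove
  have hle : ∀ z ∈ closedBall x r, u z ≤ upperEnv u r x := fun z hz =>
    le_csSup hbdd (mem_image_of_mem u hz)
  have hx0 : ‖x - x‖ ^ β = 0 := by rw [sub_self, norm_zero, zero_rpow hβ.1.ne']
  obtain ⟨a, ha⟩ : ∃ a, a = (upperEnv u r x - u x) / r ^ β := ⟨_, rfl⟩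
  have har : a * r ^ β = upperEnv u r x - u x := by rw [ha, div_mul_cancel₀ _ hrβ.ne']
  have ha0 : 0 ≤ a := by
    rw [ha]
    exact div_nonneg (sub_nonneg.2 (hle x (mem_closedBall_self hr0.le))) hrβ.le
  rw [mul_div_right_comm, ← ha]
  have hoff : ∀ ξ ∈ closedBall x r, ξ ∉ ball x r \ {x} → u ξ - a * ‖ξ - x‖ ^ β ≤ u x := by
    intro ξ hξ hξD
    by_cases hξx : ξ = x
    · rw [hξx, hx0]
      simp
    · have hnorm : ‖ξ - x‖ = r := by
        rw [← dist_eq_norm]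
        exact le_antisymm hξ (not_lt.1 fun h => hξD ⟨h, hξx⟩)
      rw [hnorm, har]
      linarith [hle ξ hξ]
  rw [← sub_le_iff_le_add]
  by_cases hyD : y ∈ ball x r \ {x}
  · have hDo : IsOpen (ball x r \ {x}) := isOpen_ball.sdiff isClosed_singleton
    have hcl : closure (ball x r \ {x}) ⊆ closedBall x r :=
      closure_minimal (sdiff_subset.trans ball_subset_closedBall) isClosed_closedBall
    refine hcomp.le_of_forall_frontier_le hDo (hcl.trans hball) ha0 (fun h => h.2 rfl) ?_ hyD
    intro ξ hξ
    rw [hDo.frontier_eq] at hξ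
    exact hoff ξ (hcl hξ.1) hξ.2
  · exact hoff y hy hyD
end
end

section
/- (Proposition 3.2, comparison principle for the finite-difference infinity-Laplacian.) Let d ≥ 1, let Ω ⊆ ℝ^d be a bounded open set, let ε > 0 with Ω_ε nonempty, and let C ≥ 0. Suppose u, v : closure(Ω_ε) → ℝ are continuous and satisfy −Δ_∞^ε u(x) ≤ C ≤ −Δ_∞^ε v(x) for all x ∈ Ω_{2ε}. Then sup_{closure(Ω_ε)} (u − v) = sup_{closure(Ω_ε) \ Ω_{2ε}} (u − v). -/
open Metric Real Set Filter

noncomputable section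

theorem IsPreconnected.inter_frontier_nonempty {X : Type*} [TopologicalSpace X] {s t : Set X}
    (hs : IsPreconnected s) (hst : (s ∩ t).Nonempty) (hst' : (s ∩ tᶜ).Nonempty) :
    (s ∩ frontier t).Nonempty := by
  by_contra hempty
  have hsub : s ⊆ interior t ∪ interior tᶜ := by
    rw [← compl_frontier_eq_union_interior]
    exact fun z hz hzf => hempty ⟨z, hz, hzf⟩
  have hdisj : Disjoint (interior t) (interior tᶜ) :=
    disjoint_compl_right.mono interior_subset interior_subset
  obtain ⟨x, hxs, hxt⟩ := hst
  obtain ⟨y, hys, hyt⟩ := hst'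
  rcases hs.subset_or_subset isOpen_interior isOpen_interior hdisj hsub with h | h
  · exact hyt (interior_subset (h hys))
  · exact interior_subset (h hxs) hxt

theorem closedBall_subset_innerSet {d : ℕ} {Ω : Set (EuclideanSpace ℝ (Fin d))} {ε : ℝ}
    (hε : 0 < ε) {x : EuclideanSpace ℝ (Fin d)} (hx : x ∈ innerSet Ω (2 * ε)) :
    closedBall x ε ⊆ innerSet Ω ε := by
  intro y hy
  have hxd := hx.2
  refine ⟨?_, ?_⟩
  · by_contra hyΩ
    obtain ⟨z, hz, hzf⟩ := IsPreconnected.inter_frontier_nonempty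
      (convex_closedBall x ε).isPreconnected ⟨x, mem_closedBall_self hε.le, hx.1⟩ ⟨y, hy, hyΩ⟩
    have := infDist_le_dist_of_mem hzf (x := x)
    rw [mem_closedBall, dist_comm] at hz
    linarith
  · have := infDist_le_infDist_add_dist (x := x) (y := y) (s := frontier Ω)
    rw [mem_closedBall, dist_comm] at hy
    linarith

theorem exists_upperEnv_eq {d : ℕ} {u : EuclideanSpace ℝ (Fin d) → ℝ} {ε : ℝ} (hε : 0 ≤ ε)
    {x : EuclideanSpace ℝ (Fin d)} (hu : ContinuousOn u (closedBall x ε)) :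
    ∃ y ∈ closedBall x ε, upperEnv u ε x = u y ∧ ∀ z ∈ closedBall x ε, u z ≤ u y := by
  obtain ⟨y, hy, hmax⟩ :=
    (isCompact_closedBall x ε).exists_isMaxOn ⟨x, mem_closedBall_self hε⟩ hu
  refine ⟨y, hy, IsGreatest.csSup_eq ⟨mem_image_of_mem u hy, ?_⟩, hmax⟩
  rintro _ ⟨z, hz, rfl⟩
  exact hmax hz

theorem exists_lowerEnv_eq {d : ℕ} {u : EuclideanSpace ℝ (Fin d) → ℝ} {ε : ℝ} (hε : 0 ≤ ε)
    {x : EuclideanSpace ℝ (Fin d)} (hu : ContinuousOn u (closedBall x ε)) :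
    ∃ y ∈ closedBall x ε, lowerEnv u ε x = u y ∧ ∀ z ∈ closedBall x ε, u y ≤ u z := by
  obtain ⟨y, hy, hmin⟩ :=
    (isCompact_closedBall x ε).exists_isMinOn ⟨x, mem_closedBall_self hε⟩ hu
  refine ⟨y, hy, IsLeast.csInf_eq ⟨mem_image_of_mem u hy, ?_⟩, hmin⟩
  rintro _ ⟨z, hz, rfl⟩
  exact hmin hz

/-- If `x` maximizes `u - v` over its `ε`-ball and minimizes `u` among the points of the ball where
that maximum is attained, then the comparison hypothesis forces both functions to be constant on
the ball. -/
theorem eq_on_closedBall_of_nlInfLap {d : ℕ} {u v : EuclideanSpace ℝ (Fin d) → ℝ} {ε C : ℝ}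
    (hε : 0 < ε) (hC : 0 ≤ C) {x : EuclideanSpace ℝ (Fin d)}
    (hu : ContinuousOn u (closedBall x ε)) (hv : ContinuousOn v (closedBall x ε))
    (hlu : -(nlInfLap u ε x) ≤ C) (hlv : C ≤ -(nlInfLap v ε x))
    (hmax : ∀ y ∈ closedBall x ε, u y - v y ≤ u x - v x)
    (hmin : ∀ y ∈ closedBall x ε, u y - v y = u x - v x → u x ≤ u y)
    {y : EuclideanSpace ℝ (Fin d)} (hy : y ∈ closedBall x ε) : u y = u x ∧ v y = v x := by
  obtain ⟨a, ha, hua, hua'⟩ := exists_upperEnv_eq hε.le hu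
  obtain ⟨b, hb, hub, hub'⟩ := exists_lowerEnv_eq hε.le hu
  obtain ⟨p, hp, hvp, hvp'⟩ := exists_upperEnv_eq hε.le hv
  obtain ⟨q, hq, hvq, hvq'⟩ := exists_lowerEnv_eq hε.le hv
  have hε2 : 0 < ε ^ 2 := by positivity
  have hCε : 0 ≤ C * ε ^ 2 := by positivity
  rw [nlInfLap, hua, hub, ← neg_div, div_le_iff₀ hε2] at hlu
  rw [nlInfLap, hvp, hvq, ← neg_div, le_div_iff₀ hε2] at hlv
  have hma := hmax a ha
  have hmq := hmax q hq
  have hap := hvp' a ha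
  have hbq := hub' q hq
  have hxq := hmin q hq (by linarith)
  have hxa := hua' x (mem_closedBall_self hε.le)
  have hya := hua' y hy
  have hyb := hub' y hy
  have hyp := hvp' y hy
  have hyq := hvq' y hy
  constructor <;> linarith

theorem exists_isMaxOn_sub_notMem_innerSet {d : ℕ} (hd : 1 ≤ d)
    {Ω : Set (EuclideanSpace ℝ (Fin d))} (hΩb : Bornology.IsBounded Ω) {ε : ℝ} (hε : 0 < ε)
    (hne : (innerSet Ω ε).Nonempty) {C : ℝ} (hC : 0 ≤ C)
    {u v : EuclideanSpace ℝ (Fin d) → ℝ}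
    (hu : ContinuousOn u (closure (innerSet Ω ε)))
    (hv : ContinuousOn v (closure (innerSet Ω ε)))
    (hcomp : ∀ x ∈ innerSet Ω (2 * ε), -(nlInfLap u ε x) ≤ C ∧ C ≤ -(nlInfLap v ε x)) :
    ∃ x ∈ closure (innerSet Ω ε) \ innerSet Ω (2 * ε),
      IsMaxOn (fun x => u x - v x) (closure (innerSet Ω ε)) x := by
  set K := closure (innerSet Ω ε)
  have hK : IsCompact K := (hΩb.subset fun _ hx => hx.1).isCompact_closure
  obtain ⟨x₀, hx₀, hmax⟩ := hK.exists_isMaxOn hne.closure (hu.sub hv)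
  by_contra! hcon
  have hin : ∀ x ∈ K, u x - v x = u x₀ - v x₀ → x ∈ innerSet Ω (2 * ε) := by
    intro x hx hxe
    by_contra hxn
    refine hcon x ⟨hx, hxn⟩ fun y hy => ?_
    have := hmax hy
    simp only [mem_ofPred_eq, Pi.sub_apply] at this ⊢
    linarith
  have hE : IsCompact (K ∩ (fun x => u x - v x) ⁻¹' {u x₀ - v x₀}) :=
    hK.of_isClosed_subset
      ((hu.sub hv).preimage_isClosed_of_isClosed isClosed_closure isClosed_singleton)
      inter_subset_left
  obtain ⟨x₁, hx₁, hmin⟩ := hE.exists_isMinOn ⟨x₀, hx₀, rfl⟩ (hu.mono inter_subset_left)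
  have hF : IsCompact ((K ∩ (fun x => u x - v x) ⁻¹' {u x₀ - v x₀}) ∩ u ⁻¹' {u x₁}) :=
    hE.of_isClosed_subset
      ((hu.mono inter_subset_left).preimage_isClosed_of_isClosed hE.isClosed isClosed_singleton)
      inter_subset_left
  let i : Fin d := ⟨0, hd⟩
  obtain ⟨x, ⟨⟨hxK, hxE⟩, hxF⟩, htop⟩ := hF.exists_isMaxOn ⟨x₁, hx₁, rfl⟩
    (f := fun x : EuclideanSpace ℝ (Fin d) => x i) (by fun_prop)
  simp only [mem_preimage, mem_singleton_iff] at hxE hxF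
  have hx2 := hin x hxK hxE
  have hball : closedBall x ε ⊆ K := (closedBall_subset_innerSet hε hx2).trans subset_closure
  have hy : x + EuclideanSpace.single i ε ∈ closedBall x ε := by
    simp [abs_of_pos hε]
  obtain ⟨huy, hvy⟩ := eq_on_closedBall_of_nlInfLap hε hC (hu.mono hball) (hv.mono hball)
    (hcomp x hx2).1 (hcomp x hx2).2 (fun y hy => hxE ▸ hmax (hball hy))
    (fun y hy he => hxF ▸ hmin ⟨hball hy, he.trans hxE⟩) hy
  have := htop ⟨⟨hball hy, by simp [huy, hvy, hxE]⟩, huy.trans hxF⟩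
  simp at this
  linarith

/-- Proposition 3.2: comparison principle for the finite-difference
infinity-Laplacian. -/
theorem stmt4 {d : ℕ} (hd : 1 ≤ d) (Ω : Set (EuclideanSpace ℝ (Fin d)))
    (hΩb : Bornology.IsBounded Ω) (hΩo : IsOpen Ω)
    (ε : ℝ) (hε : 0 < ε) (hne : (innerSet Ω ε).Nonempty)
    (C : ℝ) (hC : 0 ≤ C)
    (u v : EuclideanSpace ℝ (Fin d) → ℝ)
    (hu : ContinuousOn u (closure (innerSet Ω ε)))
    (hv : ContinuousOn v (closure (innerSet Ω ε)))
    (hcomp : ∀ x ∈ innerSet Ω (2 * ε), -(nlInfLap u ε x) ≤ C ∧ C ≤ -(nlInfLap v ε x)) :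
    sSup ((fun x => u x - v x) '' closure (innerSet Ω ε)) =
      sSup ((fun x => u x - v x) '' (closure (innerSet Ω ε) \ innerSet Ω (2 * ε))) := by
  obtain ⟨x, hx, hmax⟩ :=
    exists_isMaxOn_sub_notMem_innerSet hd hΩb hε hne hC hu hv hcomp
  have hgreat : ∀ S ⊆ closure (innerSet Ω ε), x ∈ S →
      sSup ((fun x => u x - v x) '' S) = u x - v x := by
    intro S hS hxS
    refine IsGreatest.csSup_eq ⟨mem_image_of_mem _ hxS, ?_⟩
    rintro _ ⟨y, hy, rfl⟩
    exact hmax (hS hy)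
  rw [hgreat _ subset_rfl hx.1, hgreat _ sdiff_subset hx]
end
end
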